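/- Let X_1, X_2, … be i.i.d. isotropic random vectors in ℝ^d (centered with identity covariance) whose common law ν_1 satisfies C_p(ν_1) ≤ 2, and let ν_n be the law of (1/√n) Σ_{i=1}^n X_i. Then for every n ≥ 0, C_p(ν_{2^n}) − 1 ≤ 7/(n + 7). -/

import Mathlib

open MeasureTheory ProbabilityTheory ENNReal

/-- The Poincaré constant of a Borel probability measure on `ℝ^d`: the smallest constant `C`
such that `Var_μ(f) ≤ C ∫ |∇f|² dμ` for all locally Lipschitz `f : ℝ^d → ℝ`
(`+∞` if no finite constant works). -/
noncomputable def poincareConst {d : ℕ} (μ : Measure (EuclideanSpace ℝ (Fin d))) : ℝ≥0∞ :=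
  sInf {C : ℝ≥0∞ | ∀ f : EuclideanSpace ℝ (Fin d) → ℝ, LocallyLipschitz f →
    evariance f μ ≤ C * ∫⁻ x, ‖gradient f x‖₊ ^ 2 ∂μ}

/-- The law of the standardized sum `(1/√n) ∑_{i=1}^n X_i` of `n` i.i.d. random vectors with
common law `ν₁`. -/
noncomputable def stdSumLaw {d : ℕ} (ν₁ : Measure (EuclideanSpace ℝ (Fin d))) (n : ℕ) :
    Measure (EuclideanSpace ℝ (Fin d)) :=
  Measure.map (fun x : Fin n → EuclideanSpace ℝ (Fin d) => (Real.sqrt n)⁻¹ • ∑ i, x i)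
    (Measure.pi fun _ : Fin n => ν₁)

/-- A probability measure on `ℝ^d` is isotropic if it has finite second moments, is centered,
and has identity covariance matrix. -/
def IsIsotropic {d : ℕ} (μ : Measure (EuclideanSpace ℝ (Fin d))) : Prop :=
  Integrable (fun x => ‖x‖ ^ 2) μ ∧ (∫ x, x ∂μ) = 0 ∧
    ∀ i j : Fin d, ∫ x, x i * x j ∂μ = if i = j then (1 : ℝ) else 0

theorem memLp_two_of_lintegral_lt_top {α F : Type*} [MeasurableSpace α] {μ : Measure α}
    [NormedAddCommGroup F] {f : α → F} (hf : AEStronglyMeasurable f μ)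
    (h : ∫⁻ x, ‖f x‖ₑ ^ 2 ∂μ < ∞) : MemLp f 2 μ := by
  refine ⟨hf, ?_⟩
  rw [eLpNorm_lt_top_iff_lintegral_rpow_enorm_lt_top (by simp) (by simp)]
  simpa using h

theorem MeasureTheory.MemLp.integrable_inner_of_two {α F : Type*} [MeasurableSpace α]
    {μ : Measure α} [NormedAddCommGroup F] [InnerProductSpace ℝ F] {f g : α → F}
    (hf : MemLp f 2 μ) (hg : MemLp g 2 μ) : Integrable (fun x => inner ℝ (f x) (g x)) μ :=
  memLp_one_iff_integrable.1 ((innerSL ℝ (E := F)).memLp_of_bilin 1 hf hg)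

theorem lintegral_sq_enorm_eq {α F : Type*} [MeasurableSpace α] {μ : Measure α}
    [IsFiniteMeasure μ] [NormedAddCommGroup F] {f : α → F} (hf : MemLp f 2 μ) :
    ∫⁻ x, ‖f x‖ₑ ^ 2 ∂μ = ENNReal.ofReal (∫ x, ‖f x‖ ^ 2 ∂μ) := by
  rw [ofReal_integral_eq_lintegral_ofReal hf.integrable_norm_pow' (ae_of_all _ fun _ => by positivity)]
  refine lintegral_congr fun x => ?_
  rw [ENNReal.ofReal_pow (norm_nonneg _), ofReal_norm]

theorem lintegral_sub_sq_eq_two_mul_evariance {α : Type*} [MeasurableSpace α] {μ : Measure α}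
    [IsProbabilityMeasure μ] {f : α → ℝ} (hf : Measurable f) :
    ∫⁻ p, ‖f p.1 - f p.2‖ₑ ^ 2 ∂(μ.prod μ) = 2 * evariance f μ := by
  by_cases h : MemLp f 2 μ
  · have h1 : MemLp (fun p : α × α => f p.1) 2 (μ.prod μ) := h.comp_fst μ
    have h2 : MemLp (fun p : α × α => f p.2) 2 (μ.prod μ) := h.comp_snd μ
    have h0 : MemLp (fun p : α × α => f p.1 - f p.2) 2 (μ.prod μ) := h1.sub h2
    rw [lintegral_sq_enorm_eq h0, ← ofReal_variance h, variance_eq_sub h,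
      ← ENNReal.ofReal_ofNat 2, ← ENNReal.ofReal_mul (by simp)]
    congr 1
    have e : ∀ p : α × α, ‖f p.1 - f p.2‖ ^ 2 = f p.1 ^ 2 - 2 * (f p.1 * f p.2) + f p.2 ^ 2 := by
      intro p; rw [Real.norm_eq_abs, sq_abs]; ring
    simp_rw [e]
    have h3 : Integrable (fun p : α × α => f p.1 * f p.2) (μ.prod μ) := h1.integrable_mul h2
    have h4 : Integrable (fun p : α × α => f p.1 ^ 2 - 2 * (f p.1 * f p.2)) (μ.prod μ) :=
      h1.integrable_sq.sub (h3.const_mul 2)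
    rw [integral_add h4 h2.integrable_sq,
      integral_sub h1.integrable_sq (h3.const_mul 2), integral_const_mul,
      integral_prod_mul (μ := μ) (ν := μ) f f,
      integral_fun_fst (μ := μ) (ν := μ) (fun x => f x ^ 2),
      integral_fun_snd (μ := μ) (ν := μ) (fun x => f x ^ 2)]
    simp
    ring
  · rw [evariance_eq_top hf.aestronglyMeasurable h]
    by_contra hne
    have hm : Measurable fun p : α × α => ‖f p.1 - f p.2‖ₑ ^ 2 := by fun_prop
    have hlt : ∫⁻ p, ‖f p.1 - f p.2‖ₑ ^ 2 ∂(μ.prod μ) < ∞ := by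
      rw [lt_top_iff_ne_top]; simpa using hne
    rw [lintegral_prod_symm' _ hm] at hlt
    obtain ⟨y, hy⟩ := (ae_lt_top (hm.lintegral_prod_left') hlt.ne).exists
    have := (memLp_two_of_lintegral_lt_top (f := fun x => f x - f y)
      (by fun_prop) hy).add (memLp_const (f y))
    exact h (by convert this using 1; ext; simp)

section
set_option linter.unusedSectionVars false
variable {E : Type*} [NormedAddCommGroup E] [InnerProductSpace ℝ E] [CompleteSpace E]
  [SecondCountableTopology E] [MeasurableSpace E] [BorelSpace E]

/-- The Poincaré inequality for locally Lipschitz functions, with constant `C`. -/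
def HasPoincare (μ : Measure E) (C : ℝ) : Prop :=
  ∀ f : E → ℝ, LocallyLipschitz f →
    evariance f μ ≤ ENNReal.ofReal C * ∫⁻ x, ‖gradient f x‖ₑ ^ 2 ∂μ

theorem measurable_gradient (f : E → ℝ) : Measurable (gradient f) := by
  unfold gradient
  exact (LinearIsometryEquiv.continuous _).measurable.comp (measurable_fderiv ℝ f)

theorem LocallyLipschitz.const_mul' {f : E → ℝ} (hf : LocallyLipschitz f) (w : ℝ) :
    LocallyLipschitz fun x => w * f x :=
  (ContinuousLinearMap.mul ℝ ℝ w).lipschitz.locallyLipschitz.comp hf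

theorem countable_setOf_not_ae_differentiableAt_imp (μ : Measure E) [IsFiniteMeasure μ]
    (f g : E → ℝ) :
    {w : ℝ | ¬ ∀ᵐ x ∂μ, DifferentiableAt ℝ (fun x => f x + w * g x) x →
      DifferentiableAt ℝ g x}.Countable := by
  have := Measure.countable_meas_pos_of_disjoint_iUnion (μ := μ)
    (As := fun w : ℝ => {x | DifferentiableAt ℝ (fun x => f x + w * g x) x} \
      {x | DifferentiableAt ℝ g x})
    (fun w => (measurableSet_of_differentiableAt ℝ _).diff (measurableSet_of_differentiableAt ℝ _))
    (by
      intro w w' hne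
      rw [Function.onFun, Set.disjoint_left]
      rintro x ⟨h1, h2⟩ ⟨h3, -⟩
      refine h2 ?_
      have h4 := ((h1 : DifferentiableAt ℝ _ x).sub h3).const_mul (w - w')⁻¹
      refine h4.congr_of_eventuallyEq (Filter.Eventually.of_forall fun y => ?_)
      have := sub_ne_zero.2 hne
      simp only [Pi.sub_apply]
      field_simp
      ring)
  convert this using 3 with w
  rw [pos_iff_ne_zero, ne_eq, not_iff_not, ae_iff]
  refine Eq.congr (congrArg _ ?_) rfl
  ext x
  simp

theorem HasPoincare.memLp {μ : Measure E} [IsFiniteMeasure μ] {C : ℝ} (hP : HasPoincare μ C)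
    {f : E → ℝ} (hf : LocallyLipschitz f) {V : E → E} (hV : MemLp V 2 μ)
    (hfV : ∀ᵐ x ∂μ, ‖gradient f x‖ ≤ ‖V x‖) : MemLp f 2 μ := by
  rw [← evariance_lt_top_iff_memLp hf.continuous.measurable.aestronglyMeasurable]
  refine (hP f hf).trans_lt (ENNReal.mul_lt_top (by simp) ?_)
  refine (lintegral_mono_ae (g := fun x => ‖V x‖ₑ ^ 2) ?_).trans_lt ?_
  · filter_upwards [hfV] with x hx
    gcongr
    exact enorm_le_iff_norm_le.2 hx
  · rw [lintegral_sq_enorm_eq hV]; simp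

theorem HasPoincare.variance_le {μ : Measure E} [IsFiniteMeasure μ] {C : ℝ} (hC : 0 ≤ C)
    (hP : HasPoincare μ C) {f : E → ℝ} (hf : LocallyLipschitz f) {V : E → E} (hV : MemLp V 2 μ)
    (hfV : ∀ᵐ x ∂μ, ‖gradient f x‖ ≤ ‖V x‖) : Var[f; μ] ≤ C * ∫ x, ‖V x‖ ^ 2 ∂μ := by
  have h := (hP f hf).trans (mul_le_mul_right (lintegral_mono_ae
    (g := fun x => ‖V x‖ₑ ^ 2) (by
      filter_upwards [hfV] with x hx
      gcongr
      exact enorm_le_iff_norm_le.2 hx)) _)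
  rw [lintegral_sq_enorm_eq hV, ← ofReal_variance (hP.memLp hf hV hfV),
    ← ENNReal.ofReal_mul hC] at h
  exact (ENNReal.ofReal_le_ofReal_iff (by positivity)).1 h

theorem HasPoincare.variance_add_le {μ : Measure E} [IsFiniteMeasure μ] {C : ℝ} (hC : 0 ≤ C)
    (hP : HasPoincare μ C) {f g : E → ℝ} (hf : LocallyLipschitz f) (hg : LocallyLipschitz g)
    {V : E → E} (hV : MemLp V 2 μ) (hfV : ∀ x, DifferentiableAt ℝ f x → gradient f x = V x)
    (hg2 : MemLp (gradient g) 2 μ) :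
    Var[fun x => f x + g x; μ] ≤ C * ∫ x, ‖V x + gradient g x‖ ^ 2 ∂μ := by
  have hf2 : MemLp f 2 μ := hP.memLp hf hV (ae_of_all _ fun x => by
    by_cases h : DifferentiableAt ℝ f x
    · rw [hfV x h]
    · simp [gradient_eq_zero_of_not_differentiableAt h])
  have hgm : MemLp g 2 μ := hP.memLp hg hg2 (ae_of_all _ fun x => le_rfl)
  set S : Set ℝ := {w | Var[f; μ] + 2 * (w * cov[f, g; μ]) + w ^ 2 * Var[g; μ] ≤
    C * (∫ x, ‖V x‖ ^ 2 ∂μ + w * (2 * ∫ x, inner ℝ (V x) (gradient g x) ∂μ)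
      + w ^ 2 * ∫ x, ‖gradient g x‖ ^ 2 ∂μ)} with hS
  have hclosed : IsClosed S := isClosed_le (by fun_prop) (by fun_prop)
  have hinner : Integrable (fun x => inner ℝ (V x) (gradient g x)) μ :=
    hV.integrable_inner_of_two hg2
  have hint : ∀ w : ℝ, ∫ x, ‖V x + w • gradient g x‖ ^ 2 ∂μ = ∫ x, ‖V x‖ ^ 2 ∂μ +
      w * (2 * ∫ x, inner ℝ (V x) (gradient g x) ∂μ) + w ^ 2 * ∫ x, ‖gradient g x‖ ^ 2 ∂μ := by
    intro w
    have e : ∀ x, ‖V x + w • gradient g x‖ ^ 2 = ‖V x‖ ^ 2 +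
        w * (2 * inner ℝ (V x) (gradient g x)) + w ^ 2 * ‖gradient g x‖ ^ 2 := by
      intro x
      rw [norm_add_sq_real, inner_smul_right, norm_smul, mul_pow, Real.norm_eq_abs, sq_abs]
      ring
    simp_rw [e]
    rw [integral_add, integral_add, integral_const_mul, integral_const_mul, integral_const_mul]
    · exact hV.integrable_norm_pow'
    · exact (hinner.const_mul 2).const_mul w
    · exact hV.integrable_norm_pow'.add ((hinner.const_mul 2).const_mul w)
    · exact hg2.integrable_norm_pow'.const_mul _
  have hvar : ∀ w : ℝ, Var[fun x => f x + w * g x; μ] =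
      Var[f; μ] + 2 * (w * cov[f, g; μ]) + w ^ 2 * Var[g; μ] := by
    intro w
    rw [variance_fun_add hf2 (hgm.const_mul w), covariance_const_mul_right, variance_const_mul]
  have hdense : Dense S := by
    refine ((countable_setOf_not_ae_differentiableAt_imp μ f g).dense_compl ℝ).mono ?_
    intro w hw
    simp only [Set.mem_compl_iff, Set.mem_ofPred_eq, not_not] at hw
    simp only [hS, Set.mem_ofPred_eq]
    rw [← hint, ← hvar]
    refine hP.variance_le hC (hf.add (hg.const_mul' w)) (hV.add (hg2.const_smul w)) ?_
    filter_upwards [hw] with x hx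
    by_cases h : DifferentiableAt ℝ (fun x => f x + w * g x) x
    · have hgx := hx h
      have hfx : DifferentiableAt ℝ f x := by
        have := h.sub (hgx.const_mul w)
        refine this.congr_of_eventuallyEq (Filter.Eventually.of_forall fun y => ?_)
        simp
      have : gradient (fun x => f x + w * g x) x = V x + w • gradient g x := by
        rw [← hfV x hfx]
        unfold gradient
        rw [fderiv_fun_add hfx (hgx.const_mul w), fderiv_const_mul hgx, map_add]
        simp
      simp [this]
    · rw [gradient_eq_zero_of_not_differentiableAt h]; simp
  have h1 : (1 : ℝ) ∈ S := by
    have := hdense.closure_eq ▸ hclosed.closure_eq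
    rw [← this]; trivial
  have h2 := hint 1
  have h3 := hvar 1
  simp only [one_smul, one_mul] at h2 h3
  rw [h2, h3]
  simpa [hS] using h1

theorem gradient_comp_smul_add (f : E → ℝ) {c : ℝ} (y x : E) :
    gradient (fun x => f (c • (x + y))) x = c • gradient f (c • (x + y)) := by
  unfold gradient
  rw [fderiv_comp_add_right (f := fun x => f (c • x)), fderiv_comp_smul]
  simp

theorem lipschitz_smul_add (c : ℝ) (y : E) : LocallyLipschitz fun x : E => c • (x + y) := by
  refine LipschitzWith.locallyLipschitz (K := ‖c‖₊) (LipschitzWith.of_dist_le_mul fun a b => ?_)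
  rw [dist_smul₀, dist_add_right]; rfl

/-- The law of `(X + Y) / √2` for `X`, `Y` independent with common law `μ`. -/
noncomputable def doubleLaw (μ : Measure E) : Measure E :=
  (μ.prod μ).map fun p => (√2)⁻¹ • (p.1 + p.2)

instance (μ : Measure E) [IsProbabilityMeasure μ] : IsProbabilityMeasure (doubleLaw μ) :=
  Measure.isProbabilityMeasure_map (by fun_prop)

/-- The law `μ` has finite second moment, mean zero and identity covariance. -/
structure IsStandard (μ : Measure E) : Prop where
  memLp : MemLp id 2 μ
  integral_inner : ∀ c : E, ∫ x, inner ℝ c x ∂μ = 0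
  integral_inner_sq : ∀ c : E, ∫ x, inner ℝ c x ^ 2 ∂μ = ‖c‖ ^ 2

theorem measurePreserving_exchange {α : Type*} [MeasurableSpace α] (μ : Measure α)
    [IsProbabilityMeasure μ] :
    MeasurePreserving (fun ω : (α × α) × α × α => ((ω.1.1, ω.2.1), (ω.1.2, ω.2.2)))
      ((μ.prod μ).prod (μ.prod μ)) ((μ.prod μ).prod (μ.prod μ)) := by
  have hs : MeasurePreserving (Prod.swap : α × α → α × α) (μ.prod μ) (μ.prod μ) :=
    Measure.measurePreserving_swap
  have h1 := measurePreserving_prodAssoc μ μ (μ.prod μ)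
  have h2 := (MeasurePreserving.id μ).prod (measurePreserving_prodAssoc μ μ μ).symm
  have h3 := (MeasurePreserving.id μ).prod (hs.prod (MeasurePreserving.id μ))
  have h4 := (MeasurePreserving.id μ).prod (measurePreserving_prodAssoc μ μ μ)
  have h5 := (measurePreserving_prodAssoc μ μ (μ.prod μ)).symm
  exact h5.comp (h4.comp (h3.comp (h2.comp h1)))

theorem lintegral_exchange {α : Type*} [MeasurableSpace α] (μ : Measure α)
    [IsProbabilityMeasure μ] {H : (α × α) × α × α → ℝ≥0∞} (hH : Measurable H) :
    ∫⁻ ω, H ω ∂((μ.prod μ).prod (μ.prod μ)) =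
      ∫⁻ q, ∫⁻ p, H ((p.1, q.1), (p.2, q.2)) ∂(μ.prod μ) ∂(μ.prod μ) := by
  rw [← (measurePreserving_exchange μ).lintegral_comp hH]
  exact lintegral_prod_symm' _ (hH.comp (measurePreserving_exchange μ).measurable)

theorem measurePreserving_swap_snd {α : Type*} [MeasurableSpace α] (μ : Measure α)
    [IsProbabilityMeasure μ] :
    MeasurePreserving (fun ω : (α × α) × α × α => ((ω.1.1, ω.2.2), (ω.2.1, ω.1.2)))
      ((μ.prod μ).prod (μ.prod μ)) ((μ.prod μ).prod (μ.prod μ)) := by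
  have hs : MeasurePreserving (Prod.swap : α × α → α × α) (μ.prod μ) (μ.prod μ) :=
    Measure.measurePreserving_swap
  exact (measurePreserving_exchange μ).comp
    (((MeasurePreserving.id _).prod hs).comp (measurePreserving_exchange μ))

theorem measurePreserving_swap_swap {α : Type*} [MeasurableSpace α] (μ : Measure α)
    [IsProbabilityMeasure μ] :
    MeasurePreserving (fun ω : (α × α) × α × α => (ω.1.swap, ω.2.swap))
      ((μ.prod μ).prod (μ.prod μ)) ((μ.prod μ).prod (μ.prod μ)) := by
  have hs : MeasurePreserving (Prod.swap : α × α → α × α) (μ.prod μ) (μ.prod μ) :=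
    Measure.measurePreserving_swap
  exact hs.prod hs

theorem MeasureTheory.MeasurePreserving.integral_comp_measurable {α β G : Type*}
    [MeasurableSpace α] [MeasurableSpace β] {μ : Measure α} {ν : Measure β}
    [NormedAddCommGroup G] [NormedSpace ℝ G] {T : α → β} (hT : MeasurePreserving T μ ν)
    {g : β → G} (hg : AEStronglyMeasurable g ν) : ∫ x, g (T x) ∂μ = ∫ y, g y ∂ν := by
  rw [← hT.map_eq] at hg ⊢
  exact (integral_map hT.measurable.aemeasurable hg).symm

theorem integral_inner_prod {α : Type*} [MeasurableSpace α] {μ : Measure α}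
    [IsProbabilityMeasure μ] {G : α → E} (hG : MemLp G 2 μ) :
    ∫ p, inner ℝ (G p.1) (G p.2) ∂(μ.prod μ) = ‖∫ x, G x ∂μ‖ ^ 2 := by
  have hi : Integrable G μ := hG.integrable one_le_two
  rw [integral_prod _ ((hG.comp_fst μ).integrable_inner_of_two (hG.comp_snd μ))]
  have h : ∀ x, ∫ y, inner ℝ (G x) (G y) ∂μ = inner ℝ (∫ y, G y ∂μ) (G x) := fun x => by
    rw [_root_.integral_inner hi, real_inner_comm]
  simp_rw [h]
  rw [_root_.integral_inner hi, real_inner_self_eq_norm_sq]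

theorem integral_norm_add_sq {α : Type*} [MeasurableSpace α] {μ : Measure α}
    [IsFiniteMeasure μ] {U V : α → E} (hU : MemLp U 2 μ) (hV : MemLp V 2 μ) :
    ∫ x, ‖U x + V x‖ ^ 2 ∂μ =
      ∫ x, ‖U x‖ ^ 2 ∂μ + 2 * ∫ x, inner ℝ (U x) (V x) ∂μ + ∫ x, ‖V x‖ ^ 2 ∂μ := by
  simp_rw [norm_add_sq_real]
  have h := hU.integrable_inner_of_two hV
  have h1 : Integrable (fun x => ‖U x‖ ^ 2 + 2 * inner ℝ (U x) (V x)) μ :=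
    hU.integrable_norm_pow'.add (h.const_mul 2)
  rw [integral_add h1 hV.integrable_norm_pow', integral_add hU.integrable_norm_pow'
    (h.const_mul 2), integral_const_mul]

theorem integral_norm_sub_sq {α : Type*} [MeasurableSpace α] {μ : Measure α}
    [IsFiniteMeasure μ] {U V : α → E} (hU : MemLp U 2 μ) (hV : MemLp V 2 μ) :
    ∫ x, ‖U x - V x‖ ^ 2 ∂μ =
      ∫ x, ‖U x‖ ^ 2 ∂μ - 2 * ∫ x, inner ℝ (U x) (V x) ∂μ + ∫ x, ‖V x‖ ^ 2 ∂μ := by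
  have h := integral_norm_add_sq hU hV.neg
  simpa [integral_neg, sub_eq_add_neg] using h

/-- A symmetric function on `α × α` has neighbouring correlations at most the average of its
second moment and its squared mean. -/
theorem integral_inner_shared_le {α : Type*} [MeasurableSpace α] {μ : Measure α}
    [IsProbabilityMeasure μ] {G : α × α → E} (hG : MemLp G 2 (μ.prod μ))
    (hsymm : ∀ p, G p.swap = G p) :
    2 * ∫ ω, inner ℝ (G ω.1) (G (ω.1.1, ω.2.2)) ∂((μ.prod μ).prod (μ.prod μ)) ≤
      ∫ p, ‖G p‖ ^ 2 ∂(μ.prod μ) + ‖∫ p, G p ∂(μ.prod μ)‖ ^ 2 := by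
  have hσ := measurePreserving_swap_snd μ
  have hτ := measurePreserving_swap_swap μ
  have hs : MeasurePreserving Prod.swap ((μ.prod μ).prod (μ.prod μ))
    ((μ.prod μ).prod (μ.prod μ)) := Measure.measurePreserving_swap
  set P := (μ.prod μ).prod (μ.prod μ)
  have h1 : MemLp (fun ω : (α × α) × α × α => G ω.1) 2 P := hG.comp_fst _
  have h4 : MemLp (fun ω : (α × α) × α × α => G ω.2) 2 P := hG.comp_snd _
  have h2 : MemLp (fun ω : (α × α) × α × α => G (ω.1.1, ω.2.2)) 2 P := h1.comp_measurePreserving hσ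
  have h3 : MemLp (fun ω : (α × α) × α × α => G (ω.2.1, ω.1.2)) 2 P := h4.comp_measurePreserving hσ
  have hs' : ∀ a b, G (a, b) = G (b, a) := fun a b => hsymm (b, a)
  have e12 := h1.integrable_inner_of_two h2
  have e13 := h1.integrable_inner_of_two h3
  have e42 := h4.integrable_inner_of_two h2
  have e43 := h4.integrable_inner_of_two h3
  have i13 : ∫ ω, inner ℝ (G ω.1) (G (ω.2.1, ω.1.2)) ∂P =
      ∫ ω, inner ℝ (G ω.1) (G (ω.1.1, ω.2.2)) ∂P := by
    rw [← hτ.integral_comp_measurable e12.aestronglyMeasurable]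
    refine integral_congr_ae (ae_of_all _ fun ω => ?_)
    simp only [hsymm, Prod.fst_swap, Prod.snd_swap]
    rw [hs' ω.1.2]
  have i43 : ∫ ω, inner ℝ (G ω.2) (G (ω.2.1, ω.1.2)) ∂P =
      ∫ ω, inner ℝ (G ω.1) (G (ω.1.1, ω.2.2)) ∂P := by
    rw [← hs.integral_comp_measurable e12.aestronglyMeasurable]
    rfl
  have i42 : ∫ ω, inner ℝ (G ω.2) (G (ω.1.1, ω.2.2)) ∂P =
      ∫ ω, inner ℝ (G ω.1) (G (ω.1.1, ω.2.2)) ∂P := by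
    rw [← i13, ← hs.integral_comp_measurable e13.aestronglyMeasurable]
    rfl
  have hK : MemLp (fun ω : (α × α) × α × α => G ω.1 + G ω.2) 2 P := h1.add h4
  have hK' : MemLp (fun ω : (α × α) × α × α => G (ω.1.1, ω.2.2) + G (ω.2.1, ω.1.2)) 2 P :=
    h2.add h3
  have hKK : ∫ ω, ‖G (ω.1.1, ω.2.2) + G (ω.2.1, ω.1.2)‖ ^ 2 ∂P =
      ∫ ω, ‖G ω.1 + G ω.2‖ ^ 2 ∂P :=
    hσ.integral_comp_measurable hK.integrable_norm_pow'.aestronglyMeasurable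
  have hsum : ∫ ω, inner ℝ (G ω.1 + G ω.2) (G (ω.1.1, ω.2.2) + G (ω.2.1, ω.1.2)) ∂P =
      4 * ∫ ω, inner ℝ (G ω.1) (G (ω.1.1, ω.2.2)) ∂P := by
    have ha : Integrable (fun ω => inner ℝ (G ω.1) (G (ω.1.1, ω.2.2)) +
        inner ℝ (G ω.1) (G (ω.2.1, ω.1.2))) P := e12.add e13
    have hb : Integrable (fun ω => inner ℝ (G ω.2) (G (ω.1.1, ω.2.2)) +
        inner ℝ (G ω.2) (G (ω.2.1, ω.1.2))) P := e42.add e43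
    simp_rw [inner_add_left, inner_add_right]
    rw [integral_add ha hb, integral_add e12 e13, integral_add e42 e43, i13, i43, i42]
    ring
  have hnn : 0 ≤ ∫ ω, ‖(G ω.1 + G ω.2) - (G (ω.1.1, ω.2.2) + G (ω.2.1, ω.1.2))‖ ^ 2 ∂P :=
    integral_nonneg fun _ => by positivity
  rw [integral_norm_sub_sq hK hK', hsum, hKK, integral_norm_add_sq h1 h4,
    integral_inner_prod hG, integral_fun_fst (μ := μ.prod μ) (ν := μ.prod μ) (fun p => ‖G p‖ ^ 2),
    integral_fun_snd (μ := μ.prod μ) (ν := μ.prod μ) (fun p => ‖G p‖ ^ 2)] at hnn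
  simp only [probReal_univ, one_smul] at hnn
  linarith

theorem sq_norm_integral_le {α : Type*} [MeasurableSpace α] {μ : Measure α}
    [IsProbabilityMeasure μ] {G : α → E} (hG : MemLp G 2 μ) :
    ‖∫ x, G x ∂μ‖ ^ 2 ≤ ∫ x, ‖G x‖ ^ 2 ∂μ := by
  have h : 0 ≤ ∫ x, ‖G x - ∫ y, G y ∂μ‖ ^ 2 ∂μ := integral_nonneg fun _ => by positivity
  rw [integral_norm_sub_sq hG (memLp_const _)] at h
  simp_rw [fun x => real_inner_comm (∫ y, G y ∂μ) (G x)] at h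
  rw [_root_.integral_inner (hG.integrable one_le_two), real_inner_self_eq_norm_sq] at h
  simp at h
  linarith

theorem IsStandard.memLp_inner {μ : Measure E} (h : IsStandard μ) (c : E) :
    MemLp (fun x => inner ℝ c x) 2 μ := h.memLp.const_inner c

theorem IsStandard.integral_inner_sub_sq {μ : Measure E} [IsProbabilityMeasure μ]
    (h : IsStandard μ) (c : E) : ∫ p, inner ℝ c (p.1 - p.2) ^ 2 ∂(μ.prod μ) = 2 * ‖c‖ ^ 2 := by
  have h1 := (h.memLp_inner c).comp_fst μ
  have h2 := (h.memLp_inner c).comp_snd μ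
  have e := integral_norm_sub_sq h1 h2
  have hp := integral_inner_prod (h.memLp_inner c)
  rw [hp, integral_fun_fst (μ := μ) (ν := μ) (fun x => ‖inner ℝ c x‖ ^ 2),
    integral_fun_snd (μ := μ) (ν := μ) (fun x => ‖inner ℝ c x‖ ^ 2)] at e
  simp only [Real.norm_eq_abs, sq_abs, h.integral_inner, h.integral_inner_sq,
    ← inner_sub_right] at e
  rw [e]
  simp
  ring

theorem IsStandard.doubleLaw {μ : Measure E} [IsProbabilityMeasure μ] (h : IsStandard μ) :
    IsStandard (doubleLaw μ) := by
  have hm : Measurable fun p : E × E => (√2)⁻¹ • (p.1 + p.2) := by fun_prop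
  have hmp : MeasurePreserving (fun p : E × E => (√2)⁻¹ • (p.1 + p.2)) (μ.prod μ)
    (_root_.doubleLaw μ) := hm.measurePreserving _
  refine ⟨?_, fun c => ?_, fun c => ?_⟩
  · rw [_root_.doubleLaw, memLp_map_measure_iff (by fun_prop) (by fun_prop)]
    exact ((h.memLp.comp_fst μ).add (h.memLp.comp_snd μ)).const_smul _
  · rw [← hmp.integral_comp_measurable (by fun_prop)]
    simp_rw [inner_smul_right, inner_add_right]
    rw [integral_const_mul, integral_add (((h.memLp_inner c).comp_fst μ).integrable one_le_two)
      (((h.memLp_inner c).comp_snd μ).integrable one_le_two),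
      integral_fun_fst (μ := μ) (ν := μ) (fun x => inner ℝ c x),
      integral_fun_snd (μ := μ) (ν := μ) (fun x => inner ℝ c x), h.integral_inner]
    simp
  · rw [← hmp.integral_comp_measurable (by fun_prop)]
    have e := integral_norm_add_sq ((h.memLp_inner c).comp_fst μ) ((h.memLp_inner c).comp_snd μ)
    rw [integral_inner_prod (h.memLp_inner c),
      integral_fun_fst (μ := μ) (ν := μ) (fun x => ‖inner ℝ c x‖ ^ 2),
      integral_fun_snd (μ := μ) (ν := μ) (fun x => ‖inner ℝ c x‖ ^ 2)] at e
    simp only [Real.norm_eq_abs, sq_abs, h.integral_inner, h.integral_inner_sq] at e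
    simp_rw [inner_smul_right, inner_add_right, mul_pow]
    rw [integral_const_mul, e]
    simp
    ring

theorem ae_memLp_left {α β : Type*} [MeasurableSpace α] [MeasurableSpace β] {μ : Measure α}
    {ν : Measure β} [SFinite μ] [IsFiniteMeasure ν] [IsFiniteMeasure μ] {G : α × β → E}
    (hG : Measurable G) (h : MemLp G 2 (μ.prod ν)) :
    ∀ᵐ y ∂ν, MemLp (fun x => G (x, y)) 2 μ := by
  filter_upwards [h.integrable_norm_pow'.prod_left_ae] with y hy
  exact (memLp_two_iff_integrable_sq_norm (hG.comp (by fun_prop)).aestronglyMeasurable).2 hy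

theorem HasPoincare.memLp_comp_smul_add {μ : Measure E} [IsProbabilityMeasure μ] {C : ℝ}
    (hP : HasPoincare μ C) {f : E → ℝ} (hf : LocallyLipschitz f) (a : ℝ)
    (hG : MemLp (fun p : E × E => gradient f (a • (p.1 + p.2))) 2 (μ.prod μ)) :
    MemLp (fun p : E × E => f (a • (p.1 + p.2))) 2 (μ.prod μ) := by
  have hfm : Measurable f := hf.continuous.measurable
  have hgm : Measurable (gradient f) := measurable_gradient f
  set F : E × E → ℝ := fun p => f (a • (p.1 + p.2)) with hF
  have hFm : Measurable F := by fun_prop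
  have hτ := measurePreserving_swap_swap μ
  have hs : MeasurePreserving Prod.swap ((μ.prod μ).prod (μ.prod μ))
    ((μ.prod μ).prod (μ.prod μ)) := Measure.measurePreserving_swap
  have h1 : MemLp (fun ω : (E × E) × E × E => F ω.1 - F (ω.2.1, ω.1.2)) 2
      ((μ.prod μ).prod (μ.prod μ)) := by
    refine memLp_two_of_lintegral_lt_top (by fun_prop) ?_
    rw [lintegral_exchange μ (by fun_prop)]
    have hle : ∀ q : E × E, ∫⁻ p, ‖F (p.1, q.1) - F (p.2, q.1)‖ₑ ^ 2 ∂(μ.prod μ) ≤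
        2 * (ENNReal.ofReal C * ∫⁻ x, ‖a • gradient f (a • (x + q.1))‖ₑ ^ 2 ∂μ) := by
      intro q
      rw [lintegral_sub_sq_eq_two_mul_evariance (f := fun x => F (x, q.1)) (by fun_prop)]
      gcongr
      have := hP _ (hf.comp (lipschitz_smul_add a q.1))
      simpa only [Function.comp_def, gradient_comp_smul_add] using this
    refine (lintegral_mono hle).trans_lt ?_
    have hm : Measurable fun y : E => ∫⁻ x, ‖a • gradient f (a • (x + y))‖ₑ ^ 2 ∂μ :=
      Measurable.lintegral_prod_left' (f := fun p : E × E => ‖a • gradient f (a • (p.1 + p.2))‖ₑ ^ 2)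
        (by fun_prop)
    rw [lintegral_const_mul _ (by fun_prop), lintegral_const_mul _ (by fun_prop)]
    refine ENNReal.mul_lt_top (by simp) (ENNReal.mul_lt_top (by simp) ?_)
    have h0 : ∫⁻ q : E × E, ∫⁻ x, ‖a • gradient f (a • (x + q.1))‖ₑ ^ 2 ∂μ ∂(μ.prod μ) =
        ∫⁻ y, ∫⁻ x, ‖a • gradient f (a • (x + y))‖ₑ ^ 2 ∂μ ∂μ :=
      measurePreserving_fst.lintegral_comp hm
    rw [h0, ← lintegral_prod_symm' (fun p : E × E => ‖a • gradient f (a • (p.1 + p.2))‖ₑ ^ 2)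
      (by fun_prop)]
    exact (lintegral_sq_enorm_eq (hG.const_smul a)).trans_lt (by simp)
  have h2 := (h1.comp_measurePreserving hτ).comp_measurePreserving hs
  have h3 := h1.sub h2
  have h4 : ∫⁻ ω, ‖F ω.1 - F ω.2‖ₑ ^ 2 ∂((μ.prod μ).prod (μ.prod μ)) < ∞ := by
    have : MemLp (fun ω : (E × E) × E × E => F ω.1 - F ω.2) 2
        ((μ.prod μ).prod (μ.prod μ)) := by
      convert h3 using 1
      ext ω
      simp [hF, add_comm]
    rw [lintegral_sq_enorm_eq this]; simp
  rw [lintegral_sub_sq_eq_two_mul_evariance hFm] at h4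
  rw [← evariance_lt_top_iff_memLp hFm.aestronglyMeasurable]
  exact lt_of_le_of_lt (le_mul_of_one_le_left' (by norm_num)) h4

theorem HasPoincare.lintegral_four_point_le {μ : Measure E} [IsProbabilityMeasure μ] {C : ℝ}
    (hC : 0 ≤ C) (hP : HasPoincare μ C) (hμ : IsStandard μ) {f : E → ℝ} (hf : LocallyLipschitz f)
    (a : ℝ) (hG : MemLp (fun p : E × E => gradient f (a • (p.1 + p.2))) 2 (μ.prod μ)) (c : E) :
    ∫⁻ ω, ‖(f (a • (ω.1.1 + ω.1.2)) - f (a • (ω.2.1 + ω.2.2))) +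
        (f (a • (ω.1.1 + ω.2.2)) - f (a • (ω.2.1 + ω.1.2))) - inner ℝ c (ω.1.1 - ω.2.1)‖ₑ ^ 2
        ∂((μ.prod μ).prod (μ.prod μ)) ≤
      2 * (ENNReal.ofReal C * ∫⁻ ω, ‖a • gradient f (a • (ω.1.1 + ω.1.2)) - c +
        a • gradient f (a • (ω.1.1 + ω.2.2))‖ₑ ^ 2 ∂((μ.prod μ).prod (μ.prod μ))) := by
  have hfm : Measurable f := hf.continuous.measurable
  have hgm : Measurable (gradient f) := measurable_gradient f
  rw [lintegral_exchange μ (by fun_prop), lintegral_exchange μ (by fun_prop),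
    ← lintegral_const_mul' _ _ (by simp), ← lintegral_const_mul' _ _ (by simp)]
  have hae := ae_memLp_left (by fun_prop) hG
  refine lintegral_mono_ae ?_
  filter_upwards [Measure.quasiMeasurePreserving_fst.ae hae,
    Measure.quasiMeasurePreserving_snd.ae hae] with q hq1 hq2
  have hl : LocallyLipschitz fun x : E => -inner ℝ c x := by
    exact (-(innerSL ℝ c)).lipschitz.locallyLipschitz
  have hfst : LocallyLipschitz fun x => f (a • (x + q.1)) := hf.comp (lipschitz_smul_add a q.1)
  have hsnd : LocallyLipschitz fun x => f (a • (x + q.2)) := hf.comp (lipschitz_smul_add a q.2)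
  have hV : MemLp (fun x => a • gradient f (a • (x + q.1)) - c) 2 μ :=
    (hq1.const_smul a).sub (memLp_const c)
  have hg2 : MemLp (gradient fun x => f (a • (x + q.2))) 2 μ := by
    rw [show (gradient fun x => f (a • (x + q.2))) =
      fun x => a • gradient f (a • (x + q.2)) from funext fun x => gradient_comp_smul_add f q.2 x]
    exact hq2.const_smul a
  have hfV : ∀ x, DifferentiableAt ℝ (fun x => f (a • (x + q.1)) + -inner ℝ c x) x →
      gradient (fun x => f (a • (x + q.1)) + -inner ℝ c x) x =
        a • gradient f (a • (x + q.1)) - c := by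
    intro x hx
    have hi : HasFDerivAt (fun x : E => -inner ℝ c x) (-(innerSL ℝ c)) x :=
      (innerSL ℝ c).hasFDerivAt.neg
    have hd : DifferentiableAt ℝ (fun x => f (a • (x + q.1))) x := by
      refine (hx.sub hi.differentiableAt).congr_of_eventuallyEq
        (Filter.Eventually.of_forall fun y => ?_)
      simp
    rw [← gradient_comp_smul_add]
    unfold gradient
    rw [fderiv_fun_add hd hi.differentiableAt, hi.fderiv, map_add, map_neg, ← sub_eq_add_neg]
    congr 1
    exact (InnerProductSpace.toDual ℝ E).symm_apply_apply c
  have key := hP.variance_add_le hC (hfst.add hl) hsnd hV hfV hg2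
  have hmem : MemLp (fun x => f (a • (x + q.1)) + -inner ℝ c x + f (a • (x + q.2))) 2 μ := by
    have h1 := hP.memLp hfst (hq1.const_smul a) (ae_of_all _ fun x =>
      (congrArg norm (gradient_comp_smul_add f q.1 x)).le)
    have h2 := hP.memLp hsnd (hq2.const_smul a) (ae_of_all _ fun x =>
      (congrArg norm (gradient_comp_smul_add f q.2 x)).le)
    exact (h1.add (hμ.memLp_inner c).neg).add h2
  have hmV := hV.add hg2
  have h6 : evariance (fun x => f (a • (x + q.1)) + -inner ℝ c x + f (a • (x + q.2))) μ ≤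
      ENNReal.ofReal C * ∫⁻ x, ‖a • gradient f (a • (x + q.1)) - c +
        a • gradient f (a • (x + q.2))‖ₑ ^ 2 ∂μ := by
    rw [← ofReal_variance hmem]
    refine (ENNReal.ofReal_le_ofReal key).trans ?_
    rw [ENNReal.ofReal_mul hC]
    have h7 := lintegral_sq_enorm_eq hmV
    simp only [Pi.add_apply, gradient_comp_smul_add] at h7 ⊢
    rw [h7]
  have h8 : ∫⁻ p, ‖a • gradient f (a • (p.1 + q.1)) - c +
        a • gradient f (a • (p.1 + q.2))‖ₑ ^ 2 ∂(μ.prod μ) = ∫⁻ x, ‖a • gradient f (a • (x + q.1)) - c +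
        a • gradient f (a • (x + q.2))‖ₑ ^ 2 ∂μ :=
    measurePreserving_fst.lintegral_comp (f := fun x => ‖a • gradient f (a • (x + q.1)) - c +
        a • gradient f (a • (x + q.2))‖ₑ ^ 2) (by fun_prop)
  rw [h8]
  refine le_trans (le_of_eq ?_) (mul_le_mul_right h6 2)
  rw [← lintegral_sub_sq_eq_two_mul_evariance (by fun_prop)]
  refine lintegral_congr fun p => ?_
  congr 2
  rw [inner_sub_right]
  ring

theorem integral_norm_average_sub_sq {α : Type*} [MeasurableSpace α] {P : Measure α}
    [IsProbabilityMeasure P] {U V : α → E} (hU : MemLp U 2 P) (hV : MemLp V 2 P) {b : E}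
    (hUb : ∫ x, U x ∂P = b) (hVb : ∫ x, V x ∂P = b) :
    ∫ x, ‖(√2)⁻¹ • U x - (√2 / 8) • b + (√2)⁻¹ • V x‖ ^ 2 ∂P =
      (∫ x, ‖U x‖ ^ 2 ∂P + 2 * ∫ x, inner ℝ (U x) (V x) ∂P + ∫ x, ‖V x‖ ^ 2 ∂P) / 2
        - 15 / 32 * ‖b‖ ^ 2 := by
  have h2 : √2 * √2 = 2 := Real.mul_self_sqrt (by norm_num)
  have h2' : √2 ≠ 0 := by positivity
  have hUV : MemLp (fun x => U x + V x) 2 P := hU.add hV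
  have e : ∀ x, (√2)⁻¹ • U x - (√2 / 8) • b + (√2)⁻¹ • V x =
      (√2)⁻¹ • ((U x + V x) - (1 / 4 : ℝ) • b) := by
    intro x
    have : √2 / 8 = (√2)⁻¹ * (1 / 4) := by
      field_simp; linarith
    rw [this, mul_smul]; module
  simp_rw [e, norm_smul, mul_pow]
  rw [integral_const_mul, integral_norm_sub_sq hUV (memLp_const _), integral_norm_add_sq hU hV]
  simp_rw [fun x => real_inner_comm ((1 / 4 : ℝ) • b) (U x + V x)]
  rw [_root_.integral_inner (hUV.integrable one_le_two), integral_add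
    (hU.integrable one_le_two) (hV.integrable one_le_two), hUb, hVb]
  simp only [inner_add_right, real_inner_smul_left, real_inner_self_eq_norm_sq, integral_const,
    probReal_univ, one_smul, norm_smul, mul_pow]
  norm_num
  ring

theorem two_mul_integral_inner_le {α : Type*} [MeasurableSpace α] {P : Measure α}
    [IsFiniteMeasure P] {U V : α → E} (hU : MemLp U 2 P) (hV : MemLp V 2 P) :
    2 * ∫ x, inner ℝ (U x) (V x) ∂P ≤ ∫ x, ‖U x‖ ^ 2 ∂P + ∫ x, ‖V x‖ ^ 2 ∂P := by
  have h : 0 ≤ ∫ x, ‖U x - V x‖ ^ 2 ∂P := integral_nonneg fun _ => by positivity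
  rw [integral_norm_sub_sq hU hV] at h
  linarith

theorem le_integral_four_point {μ : Measure E} [IsProbabilityMeasure μ] (hμ : IsStandard μ)
    {F : E × E → ℝ} (hF : MemLp F 2 (μ.prod μ)) (hsymm : ∀ p, F p.swap = F p) (b : E) :
    7 / 4 * ∫ ω, ‖F ω.1 - F ω.2‖ ^ 2 ∂((μ.prod μ).prod (μ.prod μ)) - 7 / 16 * ‖b‖ ^ 2 ≤
      ∫ ω, ‖(F ω.1 - F ω.2) + (F (ω.1.1, ω.2.2) - F (ω.2.1, ω.1.2)) -
        inner ℝ ((√2 / 8) • b) (ω.1.1 - ω.2.1)‖ ^ 2 ∂((μ.prod μ).prod (μ.prod μ)) := by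
  have hσ := measurePreserving_swap_snd μ
  have hτ := measurePreserving_swap_swap μ
  have hmp : MeasurePreserving (fun p : E × E => (√2)⁻¹ • (p.1 + p.2)) (μ.prod μ)
    (doubleLaw μ) := Measurable.measurePreserving (by fun_prop) _
  have hZ := hmp.prod hmp
  have hfst : MeasurePreserving (fun ω : (E × E) × E × E => (ω.1.1, ω.2.1))
      ((μ.prod μ).prod (μ.prod μ)) (μ.prod μ) :=
    measurePreserving_fst.prod measurePreserving_fst
  set P := (μ.prod μ).prod (μ.prod μ)
  have hs' : ∀ x y, F (x, y) = F (y, x) := fun x y => hsymm (y, x)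
  set A : (E × E) × E × E → ℝ := fun ω => F ω.1 - F ω.2 with hA
  set B : (E × E) × E × E → ℝ := fun ω => F (ω.1.1, ω.2.2) - F (ω.2.1, ω.1.2) with hB
  set c : E := (√2 / 8) • b with hc
  set L : (E × E) × E × E → ℝ := fun ω => inner ℝ c (ω.1.1 - ω.2.1) with hL
  set N : (E × E) × E × E → ℝ :=
    fun ω => inner ℝ b ((√2)⁻¹ • (ω.1.1 + ω.1.2) - (√2)⁻¹ • (ω.2.1 + ω.2.2)) with hN
  have hA2 : MemLp A 2 P := (hF.comp_fst _).sub (hF.comp_snd _)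
  have hB2 : MemLp B 2 P := hA2.comp_measurePreserving hσ
  have hL2 : MemLp L 2 P :=
    (((hμ.memLp.comp_fst μ).sub (hμ.memLp.comp_snd μ)).const_inner c).comp_measurePreserving hfst
  have hN2 : MemLp N 2 P :=
    (((hμ.doubleLaw.memLp.comp_fst _).sub (hμ.doubleLaw.memLp.comp_snd _)).const_inner
      b).comp_measurePreserving hZ
  have hLτ2 : MemLp (fun ω => L (ω.1.swap, ω.2.swap)) 2 P := hL2.comp_measurePreserving hτ
  have hAB2 : MemLp (fun ω => A ω + B ω) 2 P := hA2.add hB2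
  have hcn : ‖c‖ ^ 2 = ‖b‖ ^ 2 / 32 := by
    rw [hc, norm_smul, mul_pow, Real.norm_eq_abs, sq_abs, div_pow, Real.sq_sqrt (by norm_num)]
    ring
  have eBB : ∫ ω, ‖B ω‖ ^ 2 ∂P = ∫ ω, ‖A ω‖ ^ 2 ∂P :=
    hσ.integral_comp_measurable hA2.integrable_norm_pow'.aestronglyMeasurable
  have eLL : ∫ ω, ‖L ω‖ ^ 2 ∂P = ‖b‖ ^ 2 / 16 := by
    have h := hfst.integral_comp_measurable (g := fun p : E × E => inner ℝ c (p.1 - p.2) ^ 2)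
      (by fun_prop)
    simp only [hL, Real.norm_eq_abs, sq_abs]
    rw [h, hμ.integral_inner_sub_sq, hcn]
    ring
  have eNN : ∫ ω, ‖N ω‖ ^ 2 ∂P = 2 * ‖b‖ ^ 2 := by
    have h := hZ.integral_comp_measurable (g := fun p : E × E => inner ℝ b (p.1 - p.2) ^ 2)
      (by fun_prop)
    simp only [hN, Real.norm_eq_abs, sq_abs]
    exact h.trans (hμ.doubleLaw.integral_inner_sub_sq b)
  have eAB : ∫ ω, inner ℝ (A ω) (B ω) ∂P = 0 := by
    have h := hτ.integral_comp_measurable (hA2.integrable_inner_of_two hB2).aestronglyMeasurable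
    have h' : ∀ ω : (E × E) × E × E, inner ℝ (A (ω.1.swap, ω.2.swap)) (B (ω.1.swap, ω.2.swap)) =
        -inner ℝ (A ω) (B ω) := by
      intro ω
      simp only [hA, hB, hsymm, Prod.fst_swap, Prod.snd_swap]
      rw [hs' ω.1.2, hs' ω.2.2, ← inner_neg_right, neg_sub]
    simp_rw [h', integral_neg] at h
    linarith
  have eBL : ∫ ω, inner ℝ (B ω) (L ω) ∂P = ∫ ω, inner ℝ (A ω) (L ω) ∂P :=
    hσ.integral_comp_measurable (hA2.integrable_inner_of_two hL2).aestronglyMeasurable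
  have eALτ : ∫ ω, inner ℝ (A ω) (L (ω.1.swap, ω.2.swap)) ∂P = ∫ ω, inner ℝ (A ω) (L ω) ∂P := by
    rw [← hτ.integral_comp_measurable (hA2.integrable_inner_of_two hL2).aestronglyMeasurable]
    simp only [hA, hsymm]
  have eAN : ∫ ω, inner ℝ (A ω) (N ω) ∂P = 8 * ∫ ω, inner ℝ (A ω) (L ω) ∂P := by
    have h : ∀ ω, inner ℝ (A ω) (N ω) =
        4 * (inner ℝ (A ω) (L ω) + inner ℝ (A ω) (L (ω.1.swap, ω.2.swap))) := by
      intro ω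
      have h2 : √2 * √2 = 2 := Real.mul_self_sqrt (by norm_num)
      have h2' : √2 ≠ 0 := by positivity
      have h4 : (√2)⁻¹ = 4 * (√2 / 8) := by field_simp; linarith
      rw [← inner_add_right, ← real_inner_smul_right]
      congr 1
      simp only [hN, hL, hc, real_inner_smul_left, inner_sub_right, inner_add_right,
        real_inner_smul_right, Prod.fst_swap, h4]
      ring
    simp_rw [h]
    rw [integral_const_mul, integral_add (hA2.integrable_inner_of_two hL2)
      (hA2.integrable_inner_of_two hLτ2), eALτ]
    ring
  have hle := two_mul_integral_inner_le hA2 hN2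
  have hABL : ∫ ω, inner ℝ (A ω + B ω) (L ω) ∂P = 2 * ∫ ω, inner ℝ (A ω) (L ω) ∂P := by
    simp_rw [inner_add_left]
    rw [integral_add (hA2.integrable_inner_of_two hL2) (hB2.integrable_inner_of_two hL2), eBL]
    ring
  rw [integral_norm_sub_sq hAB2 hL2, integral_norm_add_sq hA2 hB2, eBB, eAB, eLL, hABL]
  rw [eAN, eNN] at hle
  linarith

theorem integral_sub_sq_le_of_four_point {μ : Measure E} [IsProbabilityMeasure μ]
    (hμ : IsStandard μ) {C : ℝ} (hC : 0 ≤ C) {F : E × E → ℝ} {G : E × E → E}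
    (hF : MemLp F 2 (μ.prod μ)) (hG : MemLp G 2 (μ.prod μ)) (hsF : ∀ p, F p.swap = F p)
    (hsG : ∀ p, G p.swap = G p) {b : E} (hb : ∫ p, G p ∂(μ.prod μ) = b)
    (hfour : ∫⁻ ω, ‖(F ω.1 - F ω.2) + (F (ω.1.1, ω.2.2) - F (ω.2.1, ω.1.2)) -
        inner ℝ ((√2 / 8) • b) (ω.1.1 - ω.2.1)‖ₑ ^ 2 ∂((μ.prod μ).prod (μ.prod μ)) ≤
      2 * (ENNReal.ofReal C * ∫⁻ ω, ‖(√2)⁻¹ • G ω.1 - (√2 / 8) • b +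
        (√2)⁻¹ • G (ω.1.1, ω.2.2)‖ₑ ^ 2 ∂((μ.prod μ).prod (μ.prod μ)))) :
    ∫ ω, ‖F ω.1 - F ω.2‖ ^ 2 ∂((μ.prod μ).prod (μ.prod μ)) ≤
      2 * ((7 * C + 1) / 8 * ∫ p, ‖G p‖ ^ 2 ∂(μ.prod μ)) := by
  have hσ := measurePreserving_swap_snd μ
  have hfst : MeasurePreserving (fun ω : (E × E) × E × E => (ω.1.1, ω.2.1))
      ((μ.prod μ).prod (μ.prod μ)) (μ.prod μ) :=
    measurePreserving_fst.prod measurePreserving_fst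
  have hlow := le_integral_four_point hμ hF hsF b
  have hshare := integral_inner_shared_le hG hsG
  have hs := sq_norm_integral_le hG
  rw [hb] at hshare hs
  set P := (μ.prod μ).prod (μ.prod μ)
  have hA2 : MemLp (fun ω : (E × E) × E × E => F ω.1 - F ω.2) 2 P :=
    (hF.comp_fst _).sub (hF.comp_snd _)
  have hB2 : MemLp (fun ω : (E × E) × E × E => F (ω.1.1, ω.2.2) - F (ω.2.1, ω.1.2)) 2 P :=
    hA2.comp_measurePreserving hσ
  have hL2 : MemLp (fun ω : (E × E) × E × E => inner ℝ ((√2 / 8) • b) (ω.1.1 - ω.2.1)) 2 P :=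
    (((hμ.memLp.comp_fst μ).sub (hμ.memLp.comp_snd μ)).const_inner _).comp_measurePreserving hfst
  have hU : MemLp (fun ω : (E × E) × E × E => G ω.1) 2 P := hG.comp_fst _
  have hV : MemLp (fun ω : (E × E) × E × E => G (ω.1.1, ω.2.2)) 2 P :=
    hU.comp_measurePreserving hσ
  have hUb : ∫ ω, G ω.1 ∂P = b :=
    (measurePreserving_fst.integral_comp_measurable hG.aestronglyMeasurable).trans hb
  have hVb : ∫ ω, G (ω.1.1, ω.2.2) ∂P = b :=
    (hσ.integral_comp_measurable hU.aestronglyMeasurable).trans hUb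
  have hUn : ∫ ω, ‖G ω.1‖ ^ 2 ∂P = ∫ p, ‖G p‖ ^ 2 ∂(μ.prod μ) :=
    measurePreserving_fst.integral_comp_measurable hG.integrable_norm_pow'.aestronglyMeasurable
  have hVn : ∫ ω, ‖G (ω.1.1, ω.2.2)‖ ^ 2 ∂P = ∫ p, ‖G p‖ ^ 2 ∂(μ.prod μ) :=
    (hσ.integral_comp_measurable hU.integrable_norm_pow'.aestronglyMeasurable).trans hUn
  have h1 : ∫⁻ ω, ‖(F ω.1 - F ω.2) + (F (ω.1.1, ω.2.2) - F (ω.2.1, ω.1.2)) -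
      inner ℝ ((√2 / 8) • b) (ω.1.1 - ω.2.1)‖ₑ ^ 2 ∂P = _ :=
    lintegral_sq_enorm_eq ((hA2.add hB2).sub hL2)
  have h2 : ∫⁻ ω, ‖(√2)⁻¹ • G ω.1 - (√2 / 8) • b + (√2)⁻¹ • G (ω.1.1, ω.2.2)‖ₑ ^ 2 ∂P = _ :=
    lintegral_sq_enorm_eq (((hU.const_smul _).sub (memLp_const _)).add (hV.const_smul _))
  rw [h1, h2, ← ENNReal.ofReal_mul hC, ← ENNReal.ofReal_ofNat 2,
    ← ENNReal.ofReal_mul (by norm_num), ENNReal.ofReal_le_ofReal_iff (by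
      have : 0 ≤ C := hC
      positivity)] at hfour
  have hreal := hlow.trans hfour
  rw [integral_norm_average_sub_sq hU hV hUb hVb, hUn, hVn] at hreal
  have h := mul_le_mul_of_nonneg_left hshare hC
  have h' := mul_le_mul_of_nonneg_left hs hC
  linarith

theorem HasPoincare.doubleLaw {μ : Measure E} [IsProbabilityMeasure μ] {C : ℝ} (hC : 0 ≤ C)
    (hP : HasPoincare μ C) (hμ : IsStandard μ) :
    HasPoincare (doubleLaw μ) ((7 * C + 1) / 8) := by
  intro f hf
  have hfm : Measurable f := hf.continuous.measurable
  have hgm : Measurable (gradient f) := measurable_gradient f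
  have hC' : 0 < (7 * C + 1) / 8 := by positivity
  have hmp : MeasurePreserving (fun p : E × E => (√2)⁻¹ • (p.1 + p.2)) (μ.prod μ)
    (_root_.doubleLaw μ) := Measurable.measurePreserving (by fun_prop) _
  set F : E × E → ℝ := fun p => f ((√2)⁻¹ • (p.1 + p.2)) with hF
  set G : E × E → E := fun p => gradient f ((√2)⁻¹ • (p.1 + p.2)) with hG
  have hFm : Measurable F := by fun_prop
  have hGm : Measurable G := by fun_prop
  have e1 : ∫⁻ x, ‖gradient f x‖ₑ ^ 2 ∂(_root_.doubleLaw μ) = ∫⁻ p, ‖G p‖ₑ ^ 2 ∂(μ.prod μ) :=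
    (hmp.lintegral_comp (by fun_prop)).symm
  have e2 : evariance f (_root_.doubleLaw μ) = evariance F (μ.prod μ) := by
    simp only [evariance]
    rw [← hmp.lintegral_comp (by fun_prop), ← hmp.integral_comp_measurable (by fun_prop)]
  rw [e1, e2]
  by_cases htop : ∫⁻ p, ‖G p‖ₑ ^ 2 ∂(μ.prod μ) = ∞
  · rw [htop, ENNReal.mul_top (by simpa using hC')]
    exact le_top
  have hG2 : MemLp G 2 (μ.prod μ) :=
    memLp_two_of_lintegral_lt_top (by fun_prop) (lt_top_iff_ne_top.2 htop)
  have hF2 : MemLp F 2 (μ.prod μ) := hP.memLp_comp_smul_add hf _ hG2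
  have hA2 : MemLp (fun ω : (E × E) × E × E => F ω.1 - F ω.2) 2
      ((μ.prod μ).prod (μ.prod μ)) := (hF2.comp_fst _).sub (hF2.comp_snd _)
  rw [lintegral_sq_enorm_eq hG2, ← ENNReal.ofReal_mul hC'.le]
  refine (ENNReal.mul_le_mul_iff_right (a := 2) (by simp) (by simp)).1 ?_
  rw [← lintegral_sub_sq_eq_two_mul_evariance hFm, lintegral_sq_enorm_eq hA2,
    ← ENNReal.ofReal_ofNat 2, ← ENNReal.ofReal_mul (by norm_num)]
  exact ENNReal.ofReal_le_ofReal <| integral_sub_sq_le_of_four_point hμ hC hF2 hG2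
    (fun p => by simp [hF, add_comm]) (fun p => by simp [hG, add_comm]) rfl
    (hP.lintegral_four_point_le hC hμ hf (√2)⁻¹ hG2 _)

end

theorem IsIsotropic.isStandard {d : ℕ} {μ : Measure (EuclideanSpace ℝ (Fin d))}
    [IsProbabilityMeasure μ] (h : IsIsotropic μ) : IsStandard μ := by
  obtain ⟨h2, h0, hc⟩ := h
  have hm : MemLp id 2 μ := (memLp_two_iff_integrable_sq_norm (by fun_prop)).2 h2
  have hi : ∀ i : Fin d, MemLp (fun x => x i) 2 μ := fun i => by
    simpa only [id_eq, EuclideanSpace.inner_single_left, map_one, one_mul] using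
      hm.const_inner (𝕜 := ℝ) (EuclideanSpace.single i (1 : ℝ))
  refine ⟨hm, fun c => ?_, fun c => ?_⟩
  · have := _root_.integral_inner (𝕜 := ℝ) (hm.integrable one_le_two) c
    simpa [h0] using this
  · have e : ∀ x, inner ℝ c x ^ 2 = ∑ i, ∑ j, c i * c j * (x i * x j) := by
      intro x
      rw [PiLp.inner_apply, sq, Finset.sum_mul_sum]
      refine Finset.sum_congr rfl fun i _ => Finset.sum_congr rfl fun j _ => ?_
      simp
      ring
    have hij : ∀ i j, Integrable (fun x : EuclideanSpace ℝ (Fin d) => c i * c j * (x i * x j)) μ :=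
      fun i j => ((hi i).integrable_mul (hi j)).const_mul _
    simp_rw [e]
    rw [integral_finsetSum _ fun i _ => integrable_finsetSum _ fun j _ => hij i j]
    simp_rw [integral_finsetSum _ fun j _ => hij _ j, integral_const_mul, hc]
    rw [EuclideanSpace.norm_sq_eq]
    simp [sq]

instance {d : ℕ} (ν : Measure (EuclideanSpace ℝ (Fin d))) [IsProbabilityMeasure ν] (n : ℕ) :
    IsProbabilityMeasure (stdSumLaw ν n) :=
  Measure.isProbabilityMeasure_map (by fun_prop)

theorem stdSumLaw_one {d : ℕ} (ν : Measure (EuclideanSpace ℝ (Fin d))) [IsProbabilityMeasure ν] :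
    stdSumLaw ν 1 = ν := by
  have h := measurePreserving_eval (fun _ : Fin 1 => ν) 0
  simpa [stdSumLaw] using h.map_eq

theorem measurePreserving_pi_prod_pi {α ι ι' κ : Type*} [MeasurableSpace α] [Fintype ι] [Fintype ι'] [Fintype κ]
    (ν : Measure α) [IsProbabilityMeasure ν] (e : ι ⊕ ι' ≃ κ) :
    MeasurePreserving (fun (x : κ → α) => (fun i => x (e (.inl i)), fun i => x (e (.inr i))))
      (Measure.pi fun _ => ν) ((Measure.pi fun _ : ι => ν).prod (Measure.pi fun _ : ι' => ν)) := by
  have h1 := measurePreserving_sumPiEquivProdPi (X := fun _ : ι ⊕ ι' => α) (fun _ => ν)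
  have h2 := (measurePreserving_piCongrLeft (α := fun _ => α) (fun _ : κ => ν) e).symm
  exact h1.comp h2

theorem stdSumLaw_add_self {d : ℕ} (ν : Measure (EuclideanSpace ℝ (Fin d)))
    [IsProbabilityMeasure ν] (m : ℕ) : stdSumLaw ν (m + m) = doubleLaw (stdSumLaw ν m) := by
  have hmp : MeasurePreserving (fun x : Fin m → EuclideanSpace ℝ (Fin d) =>
      (Real.sqrt m)⁻¹ • ∑ i, x i) (Measure.pi fun _ : Fin m => ν) (stdSumLaw ν m) :=
    Measurable.measurePreserving (by fun_prop) _
  have hdouble : MeasurePreserving (fun p : EuclideanSpace ℝ (Fin d) × EuclideanSpace ℝ (Fin d) =>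
      (√2)⁻¹ • (p.1 + p.2)) ((stdSumLaw ν m).prod (stdSumLaw ν m)) (doubleLaw (stdSumLaw ν m)) :=
    Measurable.measurePreserving (by fun_prop) _
  have h := hdouble.comp ((hmp.prod hmp).comp (measurePreserving_pi_prod_pi ν finSumFinEquiv))
  rw [← h.map_eq, stdSumLaw]
  congr 1
  ext1 x
  simp only [Function.comp_apply, Prod.map_apply, ← finSumFinEquiv.sum_comp, Fintype.sum_sum_type]
  rw [← smul_add, smul_smul, ← mul_inv, ← Real.sqrt_mul (by norm_num), Nat.cast_add, ← two_mul]

theorem hasPoincare_of_poincareConst_le {d : ℕ} {μ : Measure (EuclideanSpace ℝ (Fin d))} {C : ℝ}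
    (hC : 0 < C) (h : poincareConst μ ≤ ENNReal.ofReal C) : HasPoincare μ C := by
  intro f hf
  by_cases htop : ∫⁻ x, ‖gradient f x‖ₑ ^ 2 ∂μ = ∞
  · rw [htop, ENNReal.mul_top (by simpa using hC)]
    exact le_top
  obtain ⟨C', hC'⟩ : {C : ℝ≥0∞ | ∀ f : EuclideanSpace ℝ (Fin d) → ℝ, LocallyLipschitz f →
      evariance f μ ≤ C * ∫⁻ x, ‖gradient f x‖₊ ^ 2 ∂μ}.Nonempty := by
    rw [Set.nonempty_iff_ne_empty]
    intro he
    rw [poincareConst, he, sInf_empty] at h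
    simp at h
  by_cases hzero : ∫⁻ x, ‖gradient f x‖ₑ ^ 2 ∂μ = 0
  · refine (hC' f hf).trans ?_
    change C' * ∫⁻ x, ‖gradient f x‖ₑ ^ 2 ∂μ ≤ _
    simp [hzero]
  · rw [← ENNReal.div_le_iff hzero htop]
    refine le_trans (le_sInf ?_) h
    intro C' hC'
    exact (ENNReal.div_le_iff hzero htop).2 (hC' f hf)

theorem HasPoincare.poincareConst_le {d : ℕ} {μ : Measure (EuclideanSpace ℝ (Fin d))} {C : ℝ}
    (h : HasPoincare μ C) : poincareConst μ ≤ ENNReal.ofReal C :=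
  sInf_le h

theorem seven_eighths_pow_le (n : ℕ) : (7 / 8 : ℝ) ^ n ≤ 7 / (n + 7) := by
  induction n with
  | zero => norm_num
  | succ k ih =>
    rw [pow_succ]
    refine (mul_le_mul_of_nonneg_right ih (by norm_num)).trans ?_
    rw [div_mul_div_comm, div_le_div_iff₀ (by positivity) (by positivity)]
    push_cast
    have : (0 : ℝ) ≤ k := by positivity
    nlinarith

theorem isStandard_stdSumLaw_and_hasPoincare {d : ℕ} {ν : Measure (EuclideanSpace ℝ (Fin d))}
    [IsProbabilityMeasure ν] (hν : IsStandard ν) (hP : HasPoincare ν 2) (n : ℕ) :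
    IsStandard (stdSumLaw ν (2 ^ n)) ∧ HasPoincare (stdSumLaw ν (2 ^ n)) (1 + (7 / 8) ^ n) := by
  induction n with
  | zero =>
    rw [pow_zero, stdSumLaw_one]
    exact ⟨hν, by norm_num [hP]⟩
  | succ k ih =>
    rw [pow_succ, mul_two, stdSumLaw_add_self]
    refine ⟨ih.1.doubleLaw, ?_⟩
    have h := ih.2.doubleLaw (by positivity) ih.1
    rwa [show (7 * (1 + (7 / 8) ^ k) + 1) / 8 = 1 + (7 / 8 : ℝ) ^ (k + 1) by ring] at h

/-- **Convergence of the Poincaré constant along doubling.** For i.i.d. isotropic random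
vectors with law `ν₁` satisfying `C_p(ν₁) ≤ 2`, the standardized sums satisfy
`C_p(ν_{2^n}) − 1 ≤ 7/(n + 7)` for every `n ≥ 0`. -/
theorem poincareConst_doubling_rate {d : ℕ} (ν₁ : Measure (EuclideanSpace ℝ (Fin d)))
    [IsProbabilityMeasure ν₁] (hiso : IsIsotropic ν₁) (hp : poincareConst ν₁ ≤ 2) (n : ℕ) :
    poincareConst (stdSumLaw ν₁ (2 ^ n)) - 1 ≤ 7 / ((n : ℝ≥0∞) + 7) := by
  have h2 : HasPoincare ν₁ 2 := hasPoincare_of_poincareConst_le two_pos (by simpa using hp)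
  have h := (isStandard_stdSumLaw_and_hasPoincare hiso.isStandard h2 n).2.poincareConst_le
  rw [ENNReal.ofReal_add zero_le_one (by positivity), ENNReal.ofReal_one, add_comm] at h
  refine (tsub_le_iff_right.2 h).trans ?_
  refine (ENNReal.ofReal_le_ofReal (seven_eighths_pow_le n)).trans_eq ?_
  rw [ENNReal.ofReal_div_of_pos (by positivity), ENNReal.ofReal_add (by positivity) (by norm_num)]
  simp
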